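/- arXiv:0706.1545 — 6 statements merged into one kernel-verified Lean document; each statement's English description precedes it below -/
import Mathlib

section
/- Let n ≥ 1 and t₁ ∈ ℝ. Let g : ℝ → Matrix (Fin n) (Fin n) ℝ be twice differentiable with g(t) invertible for all t, let I₀ : ℝ → (Matrix (Fin n) (Fin n) ℝ →ₗ[ℝ] Matrix (Fin n) (Fin n) ℝ) be differentiable, and let J₀ : ℝ → Matrix (Fin n) (Fin n) ℝ be differentiable. Set ξ(t) := g(t)⁻¹ * g'(t) and Π(t) := I₀(t)(ξ(t)) + J₀(t). Then the following are equivalent: (i) the curve t ↦ g(t) * Π(t) * g(t)⁻¹ is constant; (ii) for all t, [ξ(t), I₀(t)(ξ(t)) + J₀(t)] + (I₀'(t))(ξ(t)) + I₀(t)(ξ'(t)) + J₀'(t) = 0. Moreover, if these hold and g(t₁) * Π(t₁) * g(t₁)⁻¹ = μ, then g(t) * Π(t) * g(t)⁻¹ = μ for all t. -/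
open Matrix

attribute [local instance] Matrix.linftyOpNormedAddCommGroup Matrix.linftyOpNormedRing
  Matrix.linftyOpNormedAlgebra

/-! The spatial momentum is the body momentum `P` transported by conjugation with `g`, so the
product rule gives `(g P g⁻¹)' = g (⁅g⁻¹ g', P⁆ + P') g⁻¹`. Conjugation by `g` is injective, hence
the spatial momentum is constant iff `⁅g⁻¹ g', P⁆ + P' = 0`; substituting `P = I₀ ξ + J₀` turns
this into the second-order equation for `g`. -/

open scoped Ring

section ConstantCurve

variable {𝕜 E : Type*} [RCLike 𝕜] [NormedAddCommGroup E] [NormedSpace 𝕜 E]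

theorem forall_eq_iff_deriv_eq_zero {f : 𝕜 → E} (hf : Differentiable 𝕜 f) :
    (∀ s t, f s = f t) ↔ ∀ t, deriv f t = 0 := by
  refine ⟨fun hconst t => ?_, is_const_of_deriv_eq_zero hf⟩
  rw [show f = fun _ => f t from funext fun s => hconst s t, deriv_const]

end ConstantCurve

theorem conj_ringInverse_eq_zero_iff {M : Type*} [MonoidWithZero M] {a x : M} (ha : IsUnit a) :
    a * x * a⁻¹ʳ = 0 ↔ x = 0 := by
  rw [ha.ringInverse.mul_left_eq_zero, ha.mul_right_eq_zero]

/-- The spatial momentum `Ad*_g P` of a body momentum curve `P` along `g`, the conserved quantity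
of the motion. The dual of the Lie algebra is identified with the algebra itself, so that the
coadjoint action is conjugation. -/
noncomputable def spatialMomentum {T A : Type*} [MonoidWithZero A] (g P : T → A) (t : T) : A :=
  g t * P t * (g t)⁻¹ʳ

section NormedAlgebra

variable {𝕜 A : Type*} [NormedRing A] [HasSummableGeomSeries A]

section Derivative

variable [NontriviallyNormedField 𝕜] [NormedAlgebra 𝕜 A]

/-- The body velocity of a curve `g` of units: its derivative, left-translated back to the
identity. -/
noncomputable def bodyVelocity (g : 𝕜 → A) (t : 𝕜) : A :=
  (g t)⁻¹ʳ * deriv g t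

theorem hasDerivAt_ringInverse_comp {g : 𝕜 → A} {g' : A} {t : 𝕜} (hg : HasDerivAt g g' t)
    (hu : IsUnit (g t)) :
    HasDerivAt (fun s => (g s)⁻¹ʳ) (-((g t)⁻¹ʳ * g' * (g t)⁻¹ʳ)) t := by
  obtain ⟨u, hgu⟩ := hu
  have hinv := hasFDerivAt_ringInverse (𝕜 := 𝕜) u
  rw [hgu] at hinv
  simpa [← hgu, Function.comp_def] using hinv.comp_hasDerivAt t hg

theorem differentiable_bodyVelocity {g : 𝕜 → A} (hg : Differentiable 𝕜 g)
    (hg' : Differentiable 𝕜 (deriv g)) (hu : ∀ t, IsUnit (g t)) :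
    Differentiable 𝕜 (bodyVelocity g) :=
  (hg.inverse hu).mul hg'

theorem hasDerivAt_spatialMomentum {g P : 𝕜 → A} {P' : A} {t : 𝕜}
    (hg : DifferentiableAt 𝕜 g t) (hP : HasDerivAt P P' t) (hu : IsUnit (g t)) :
    HasDerivAt (spatialMomentum g P)
      (g t * (⁅bodyVelocity g t, P t⁆ + P') * (g t)⁻¹ʳ) t := by
  have hvel : deriv g t = g t * bodyVelocity g t :=
    (Ring.mul_inverse_cancel_left _ _ hu).symm
  have hinv : HasDerivAt (fun s => (g s)⁻¹ʳ) (-(bodyVelocity g t * (g t)⁻¹ʳ)) t :=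
    hasDerivAt_ringInverse_comp hg.hasDerivAt hu
  refine ((hg.hasDerivAt.mul hP).mul hinv).congr_deriv ?_
  rw [hvel, Ring.lie_def]
  simp only [Pi.mul_apply]
  noncomm_ring

end Derivative

variable [RCLike 𝕜] [NormedAlgebra 𝕜 A]

theorem spatialMomentum_const_iff {g P : 𝕜 → A} (hg : Differentiable 𝕜 g)
    (hP : Differentiable 𝕜 P) (hu : ∀ t, IsUnit (g t)) :
    (∀ s t, spatialMomentum g P s = spatialMomentum g P t) ↔
      ∀ t, ⁅bodyVelocity g t, P t⁆ + deriv P t = 0 := by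
  have hderiv (t : 𝕜) := hasDerivAt_spatialMomentum (hg t) (hP t).hasDerivAt (hu t)
  rw [forall_eq_iff_deriv_eq_zero fun t => (hderiv t).differentiableAt]
  exact forall_congr' fun t => by rw [(hderiv t).deriv, conj_ringInverse_eq_zero_iff (hu t)]

theorem momentum_equation_equiv_general (t₁ : 𝕜) {g : 𝕜 → A} (hg : Differentiable 𝕜 g)
    (hg' : Differentiable 𝕜 (deriv g)) (hu : ∀ t, IsUnit (g t))
    {I₀ : 𝕜 → A →L[𝕜] A} (hI₀ : Differentiable 𝕜 I₀)
    {J₀ : 𝕜 → A} (hJ₀ : Differentiable 𝕜 J₀) {ξ P : 𝕜 → A}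
    (hξ : ∀ t, ξ t = bodyVelocity g t) (hP : ∀ t, P t = I₀ t (ξ t) + J₀ t) (μ : A) :
    ((∀ s t, spatialMomentum g P s = spatialMomentum g P t) ↔
      ∀ t, ⁅ξ t, I₀ t (ξ t) + J₀ t⁆ + deriv I₀ t (ξ t) + I₀ t (deriv ξ t) + deriv J₀ t = 0) ∧
    ((∀ s t, spatialMomentum g P s = spatialMomentum g P t) →
      spatialMomentum g P t₁ = μ → ∀ t, spatialMomentum g P t = μ) := by
  refine ⟨?_, fun hconst hμ t => (hconst t t₁).trans hμ⟩
  obtain rfl : ξ = bodyVelocity g := funext hξ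
  have hvel : Differentiable 𝕜 (bodyVelocity g) := differentiable_bodyVelocity hg hg' hu
  have hderiv (t : 𝕜) : HasDerivAt P
      (deriv I₀ t (bodyVelocity g t) + I₀ t (deriv (bodyVelocity g) t) + deriv J₀ t) t := by
    rw [funext hP]
    exact ((hI₀ t).hasDerivAt.clm_apply (hvel t).hasDerivAt).add (hJ₀ t).hasDerivAt
  rw [spatialMomentum_const_iff hg (fun t => (hderiv t).differentiableAt) hu]
  simp only [(hderiv _).deriv, hP, add_assoc]

end NormedAlgebra

/-- Matrix form of Proposition (J-1): with body velocity `ξ = g⁻¹ g'`, time-dependent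
locked inertia tensor `I₀(t)` and internal momentum `J₀(t)`, and body momentum
`Π = I₀ ξ + J₀` (here `Mom`), the spatial momentum `g Π g⁻¹` is constant iff
`[ξ, I₀ ξ + J₀] + I₀' ξ + I₀ ξ' + J₀' = 0`; moreover in that case, if the spatial
momentum equals `μ` at `t₁`, it equals `μ` for all times. -/
theorem momentum_equation_equiv {n : ℕ} (hn : 1 ≤ n) (t₁ : ℝ)
    (g : ℝ → Matrix (Fin n) (Fin n) ℝ)
    (hg : Differentiable ℝ g) (hg' : Differentiable ℝ (deriv g))
    (hinv : ∀ t, IsUnit (g t))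
    (I₀ : ℝ → (Matrix (Fin n) (Fin n) ℝ →L[ℝ] Matrix (Fin n) (Fin n) ℝ))
    (hI₀ : Differentiable ℝ I₀)
    (J₀ : ℝ → Matrix (Fin n) (Fin n) ℝ) (hJ₀ : Differentiable ℝ J₀)
    (ξ Mom : ℝ → Matrix (Fin n) (Fin n) ℝ)
    (hξ : ∀ t, ξ t = (g t)⁻¹ * deriv g t)
    (hMomdef : ∀ t, Mom t = I₀ t (ξ t) + J₀ t)
    (μ : Matrix (Fin n) (Fin n) ℝ) :
    ((∀ s t, g s * Mom s * (g s)⁻¹ = g t * Mom t * (g t)⁻¹) ↔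
      (∀ t, (ξ t * (I₀ t (ξ t) + J₀ t) - (I₀ t (ξ t) + J₀ t) * ξ t)
          + (deriv I₀ t) (ξ t) + I₀ t (deriv ξ t) + deriv J₀ t = 0)) ∧
    ((∀ s t, g s * Mom s * (g s)⁻¹ = g t * Mom t * (g t)⁻¹) →
      g t₁ * Mom t₁ * (g t₁)⁻¹ = μ → ∀ t, g t * Mom t * (g t)⁻¹ = μ) := by
  simp only [nonsing_inv_eq_ringInverse] at hξ ⊢
  exact momentum_equation_equiv_general t₁ hg hg' hinv hI₀ hJ₀ hξ hMomdef μ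
end

section
/- Let m, I, R be real numbers with m > 0, I > 0, R > 0, let t₁ ∈ ℝ, let x, y, θ : ℝ → ℝ be twice differentiable and φ : ℝ → ℝ be differentiable, and suppose that for all t: (i) x'(t) = R·θ'(t)·cos(φ(t)) and y'(t) = R·θ'(t)·sin(φ(t)) (the non-sliding constraints), and (ii) m·R·(x''(t)·cos(φ(t)) + y''(t)·sin(φ(t))) + I·θ''(t) = 0 (the nonholonomic momentum equation). Then θ''(t) = 0 for all t, and for all t: θ(t) = θ(t₁) + θ'(t₁)·(t − t₁), x(t) = x(t₁) + R·θ'(t₁)·∫_{t₁}^{t} cos(φ(s)) ds, and y(t) = y(t₁) + R·θ'(t₁)·∫_{t₁}^{t} sin(φ(s)) ds. -/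
/-! The nonholonomic momentum equation multiplied by the rolling speed `θ'` is the power balance
`m (x' x'' + y' y'') + I θ' θ'' = 0`, so kinetic energy is conserved. On velocities satisfying the
non-sliding constraints this energy is `(m R² + I) θ'² / 2`. Hence `θ'²` is constant, and so is
`θ'` by continuity; the constraints then express `x'` and `y'` as constant multiples of `cos φ` and
`sin φ`. -/

open MeasureTheory Filter

theorem eq_of_continuous_of_sq_eq {X K : Type*} [TopologicalSpace X] [PreconnectedSpace X]
    [Field K] [TopologicalSpace K] [T1Space K] [ContinuousInv₀ K] [ContinuousMul K]
    {f : X → K} (hf : Continuous f) (hsq : ∀ a b, f a ^ 2 = f b ^ 2) (a b : X) : f a = f b := by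
  by_cases hb : f b = 0
  · rw [hb, ← sq_eq_zero_iff, hsq a b, hb, zero_pow two_ne_zero]
  · exact isPreconnected_univ.eq_of_sq_eq hf.continuousOn continuousOn_const
      (fun x _ => hsq x b) (fun _ => hb) (Set.mem_univ b) rfl (Set.mem_univ a)

section Quadrature

variable {E : Type*} [NormedAddCommGroup E]

theorem intervalIntegrable_of_norm_le {μ : Measure ℝ} [IsLocallyFiniteMeasure μ] {g : ℝ → E}
    {C : ℝ} (hg : AEStronglyMeasurable g μ) (hC : ∀ t, ‖g t‖ ≤ C) (a b : ℝ) :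
    IntervalIntegrable g μ a b :=
  (intervalIntegrable_const (c := C)).mono_fun' hg.restrict (Eventually.of_forall hC)

theorem eq_add_smul_integral_of_hasDerivAt [NormedSpace ℝ E] [CompleteSpace E] {f g : ℝ → E}
    {c a b : ℝ} (hf : ∀ t, HasDerivAt f (c • g t) t) (hg : IntervalIntegrable g volume a b) :
    f b = f a + c • ∫ s in a..b, g s := by
  rw [← intervalIntegral.integral_smul,
    intervalIntegral.integral_eq_sub_of_hasDerivAt (fun t _ => hf t) (hg.smul c),
    add_sub_cancel]

end Quadrature

/-- The kinetic energy of a disk of mass `m` and moment of inertia `I` about its axle, with contact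
point velocity `(u, v)` and rolling speed `ω`. The heading rotation is not included: its motion is
prescribed. -/
noncomputable def diskEnergy (m I u v ω : ℝ) : ℝ :=
  m / 2 * (u ^ 2 + v ^ 2) + I / 2 * ω ^ 2

theorem hasDerivAt_diskEnergy {m I u' v' ω' t : ℝ} {u v ω : ℝ → ℝ} (hu : HasDerivAt u u' t)
    (hv : HasDerivAt v v' t) (hω : HasDerivAt ω ω' t) :
    HasDerivAt (fun s => diskEnergy m I (u s) (v s) (ω s))
      (m * (u t * u' + v t * v') + I * (ω t * ω')) t := by
  refine ((((hu.pow 2).add (hv.pow 2)).const_mul (m / 2)).add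
    ((hω.pow 2).const_mul (I / 2))).congr_deriv ?_
  push_cast
  ring

section NoSlip

theorem diskEnergy_of_noSlip {m I R u v ω α : ℝ} (hu : u = R * ω * Real.cos α)
    (hv : v = R * ω * Real.sin α) : diskEnergy m I u v ω = (m * R ^ 2 + I) / 2 * ω ^ 2 := by
  rw [diskEnergy, hu, hv]
  linear_combination m / 2 * R ^ 2 * ω ^ 2 * Real.sin_sq_add_cos_sq α

theorem power_eq_zero_of_noSlip {m I R u v ω u' v' ω' α : ℝ} (hu : u = R * ω * Real.cos α)
    (hv : v = R * ω * Real.sin α)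
    (hmom : m * R * (u' * Real.cos α + v' * Real.sin α) + I * ω' = 0) :
    m * (u * u' + v * v') + I * (ω * ω') = 0 := by
  rw [hu, hv]
  linear_combination ω * hmom

variable {m I R : ℝ} {u v ω φ : ℝ → ℝ}

theorem diskEnergy_const (hu : Differentiable ℝ u) (hv : Differentiable ℝ v)
    (hω : Differentiable ℝ ω) (hcu : ∀ t, u t = R * ω t * Real.cos (φ t))
    (hcv : ∀ t, v t = R * ω t * Real.sin (φ t))
    (hmom : ∀ t, m * R * (deriv u t * Real.cos (φ t) + deriv v t * Real.sin (φ t))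
      + I * deriv ω t = 0) (s t : ℝ) :
    diskEnergy m I (u s) (v s) (ω s) = diskEnergy m I (u t) (v t) (ω t) := by
  have hE (r : ℝ) := hasDerivAt_diskEnergy (m := m) (I := I) (hu r).hasDerivAt (hv r).hasDerivAt
    (hω r).hasDerivAt
  exact is_const_of_deriv_eq_zero (fun r => (hE r).differentiableAt)
    (fun r => (hE r).deriv.trans (power_eq_zero_of_noSlip (hcu r) (hcv r) (hmom r))) s t

theorem rollingSpeed_const (hJ : m * R ^ 2 + I ≠ 0) (hu : Differentiable ℝ u)
    (hv : Differentiable ℝ v) (hω : Differentiable ℝ ω)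
    (hcu : ∀ t, u t = R * ω t * Real.cos (φ t)) (hcv : ∀ t, v t = R * ω t * Real.sin (φ t))
    (hmom : ∀ t, m * R * (deriv u t * Real.cos (φ t) + deriv v t * Real.sin (φ t))
      + I * deriv ω t = 0) (s t : ℝ) : ω s = ω t := by
  refine eq_of_continuous_of_sq_eq hω.continuous (fun a b => ?_) s t
  have hE := diskEnergy_const hu hv hω hcu hcv hmom a b
  rw [diskEnergy_of_noSlip (hcu a) (hcv a), diskEnergy_of_noSlip (hcu b) (hcv b)] at hE
  exact mul_left_cancel₀ (div_ne_zero hJ two_ne_zero) hE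

end NoSlip

theorem rolling_disk_general (m I R t₁ : ℝ) (hJ : m * R ^ 2 + I ≠ 0) (x y θ φ : ℝ → ℝ)
    (hx : Differentiable ℝ x) (hx' : Differentiable ℝ (deriv x))
    (hy : Differentiable ℝ y) (hy' : Differentiable ℝ (deriv y))
    (hθ : Differentiable ℝ θ) (hθ' : Differentiable ℝ (deriv θ))
    (hφ : Measurable φ)
    (hcx : ∀ t, deriv x t = R * deriv θ t * Real.cos (φ t))
    (hcy : ∀ t, deriv y t = R * deriv θ t * Real.sin (φ t))
    (hmom : ∀ t, m * R * (deriv (deriv x) t * Real.cos (φ t)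
        + deriv (deriv y) t * Real.sin (φ t)) + I * deriv (deriv θ) t = 0) :
    (∀ t, deriv (deriv θ) t = 0) ∧
    (∀ t, θ t = θ t₁ + deriv θ t₁ * (t - t₁)
      ∧ x t = x t₁ + R * deriv θ t₁ * ∫ s in t₁..t, Real.cos (φ s)
      ∧ y t = y t₁ + R * deriv θ t₁ * ∫ s in t₁..t, Real.sin (φ s)) := by
  have hω (t : ℝ) : deriv θ t = deriv θ t₁ :=
    rollingSpeed_const hJ hx' hy' hθ' hcx hcy hmom t t₁
  have hθd (t : ℝ) : HasDerivAt θ (deriv θ t₁ • (1 : ℝ)) t := by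
    simpa only [smul_eq_mul, mul_one, hω t] using (hθ t).hasDerivAt
  have hxd (t : ℝ) : HasDerivAt x ((R * deriv θ t₁) • Real.cos (φ t)) t := by
    simpa only [smul_eq_mul, hcx t, hω t] using (hx t).hasDerivAt
  have hyd (t : ℝ) : HasDerivAt y ((R * deriv θ t₁) • Real.sin (φ t)) t := by
    simpa only [smul_eq_mul, hcy t, hω t] using (hy t).hasDerivAt
  refine ⟨fun t => by rw [funext hω, deriv_const], fun t => ⟨?_, ?_, ?_⟩⟩
  · simpa using eq_add_smul_integral_of_hasDerivAt hθd (intervalIntegrable_const (b := t))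
  · exact eq_add_smul_integral_of_hasDerivAt hxd <| intervalIntegrable_of_norm_le
      hφ.cos.aestronglyMeasurable (fun s => Real.abs_cos_le_one (φ s)) t₁ t
  · exact eq_add_smul_integral_of_hasDerivAt hyd <| intervalIntegrable_of_norm_le
      hφ.sin.aestronglyMeasurable (fun s => Real.abs_sin_le_one (φ s)) t₁ t

/-- The base-controlled vertically rolling disk: the non-sliding constraints together with
the nonholonomic momentum equation force `θ'' = 0`, and the group variables `(x, y, θ)` are
induced from the controlled heading `φ(t)` by explicit quadratures. -/
theorem rolling_disk (m I R t₁ : ℝ) (hm : 0 < m) (hI : 0 < I) (hR : 0 < R)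
    (x y θ φ : ℝ → ℝ)
    (hx : Differentiable ℝ x) (hx' : Differentiable ℝ (deriv x))
    (hy : Differentiable ℝ y) (hy' : Differentiable ℝ (deriv y))
    (hθ : Differentiable ℝ θ) (hθ' : Differentiable ℝ (deriv θ))
    (hφ : Differentiable ℝ φ)
    (hcx : ∀ t, deriv x t = R * deriv θ t * Real.cos (φ t))
    (hcy : ∀ t, deriv y t = R * deriv θ t * Real.sin (φ t))
    (hmom : ∀ t, m * R * (deriv (deriv x) t * Real.cos (φ t)
        + deriv (deriv y) t * Real.sin (φ t)) + I * deriv (deriv θ) t = 0) :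
    (∀ t, deriv (deriv θ) t = 0) ∧
    (∀ t, θ t = θ t₁ + deriv θ t₁ * (t - t₁)
      ∧ x t = x t₁ + R * deriv θ t₁ * ∫ s in t₁..t, Real.cos (φ s)
      ∧ y t = y t₁ + R * deriv θ t₁ * ∫ s in t₁..t, Real.sin (φ s)) :=
  rolling_disk_general m I R t₁ (by positivity) x y θ φ hx hx' hy hy' hθ hθ'
    hφ.continuous.measurable hcx hcy hmom
end

section
/- Let γ ∈ ℝ and t₁ ∈ ℝ. Let B : ℝ → (Fin 3 → ℝ) be continuous, let J : ℝ → (Fin 3 → ℝ) be differentiable with J'(t) = γ • (J(t) ×₃ B(t)) for all t (where ×₃ is the cross product on ℝ³), and let h : ℝ → ((Fin 3 → ℝ) →L[ℝ] (Fin 3 → ℝ)) be differentiable with h(t₁) = id and h'(t) = L(−γ • B(t)) ∘ h(t) for all t, where L(ω) denotes the linear map v ↦ ω ×₃ v. Then J(t) = h(t)(J(t₁)) for all t. -/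
open Matrix

/-! The Larmor generator `v ↦ ω ⨯₃ v` is skew for the dot product, so solutions of
`x' = ω(t) ⨯₃ x` have constant length. The difference of two solutions is again a solution; if it
vanishes at one time, its length, hence the difference itself, vanishes at all times. Apply this to
`J` and `t ↦ h t (J t₁)`. -/

section SkewEvolution

variable {E : Type*} [NormedAddCommGroup E] [NormedSpace ℝ E] {φ : E →L[ℝ] E →L[ℝ] ℝ}

theorem bilin_self_eq_of_hasDerivAt {x x' : ℝ → E} (hx : ∀ t, HasDerivAt x (x' t) t)
    (hskew : ∀ t, φ (x t) (x' t) + φ (x' t) (x t) = 0) (s t : ℝ) :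
    φ (x s) (x s) = φ (x t) (x t) := by
  have hderiv (u : ℝ) : HasDerivAt (fun u ↦ φ (x u) (x u)) 0 u :=
    hskew u ▸ φ.hasDerivAt_of_bilinear (fun _ ↦ hx u) (fun _ ↦ hx u)
  exact is_const_of_deriv_eq_zero (fun u ↦ (hderiv u).differentiableAt)
    (fun u ↦ (hderiv u).deriv) s t

theorem eq_of_hasDerivAt_of_skew {A : ℝ → E →ₗ[ℝ] E} {x y : ℝ → E} {t₁ : ℝ}
    (hφ : ∀ v, φ v v = 0 → v = 0) (hA : ∀ t v, φ v (A t v) + φ (A t v) v = 0)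
    (hx : ∀ t, HasDerivAt x (A t (x t)) t) (hy : ∀ t, HasDerivAt y (A t (y t)) t)
    (hxy : x t₁ = y t₁) (t : ℝ) : x t = y t := by
  have hsub (u : ℝ) : HasDerivAt (x - y) (A u ((x - y) u)) u := by
    simpa only [Pi.sub_apply, map_sub] using (hx u).sub (hy u)
  have hconst := bilin_self_eq_of_hasDerivAt hsub (fun u ↦ hA u ((x - y) u)) t t₁
  have hzero : (x - y) t₁ = 0 := sub_eq_zero.2 hxy
  rw [hzero, map_zero (φ 0)] at hconst
  exact sub_eq_zero.1 (hφ _ hconst)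

theorem larmor_rotation_general {A : ℝ → E →L[ℝ] E} {x : ℝ → E} {h : ℝ → E →L[ℝ] E} {t₁ : ℝ}
    (hφ : ∀ v, φ v v = 0 → v = 0) (hA : ∀ t v, φ v (A t v) + φ (A t v) v = 0)
    (hx : ∀ t, HasDerivAt x (A t (x t)) t) (hh : ∀ t, HasDerivAt h ((A t).comp (h t)) t)
    (hh₁ : h t₁ = ContinuousLinearMap.id ℝ E) (t : ℝ) : x t = h t (x t₁) := by
  have horbit (u : ℝ) : HasDerivAt (fun u ↦ h u (x t₁)) (A u (h u (x t₁))) u := by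
    simpa using (hh u).clm_apply (hasDerivAt_const u (x t₁))
  have hinit : x t₁ = h t₁ (x t₁) := by rw [hh₁, ContinuousLinearMap.id_apply]
  exact eq_of_hasDerivAt_of_skew (A := fun u ↦ A u) hφ hA hx horbit hinit t

end SkewEvolution

section DotProduct

variable {ι : Type*} [Fintype ι]

/-- The dot product on `ι → ℝ` as a continuous bilinear form; it supplies the invariant form for
rotations, since `ι → ℝ` carries the sup norm and is not an inner product space. -/
noncomputable def dotProductCLM : (ι → ℝ) →L[ℝ] (ι → ℝ) →L[ℝ] ℝ :=
  (dotProductBilin ℝ ℝ).toContinuousBilinearMap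

theorem dotProductCLM_apply (v w : ι → ℝ) : dotProductCLM v w = v ⬝ᵥ w :=
  LinearMap.toContinuousBilinearMap_apply _ v w

theorem dotProductCLM_self_eq_zero {v : ι → ℝ} : dotProductCLM v v = 0 ↔ v = 0 := by
  rw [dotProductCLM_apply, dotProduct_self_eq_zero]

end DotProduct

theorem dotProductCLM_cross_add_cross (ω v : Fin 3 → ℝ) :
    dotProductCLM v (ω ⨯₃ v) + dotProductCLM (ω ⨯₃ v) v = 0 := by
  rw [dotProductCLM_apply, dotProductCLM_apply, dotProduct_comm (ω ⨯₃ v), dot_cross_self, add_zero]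

theorem smul_cross_eq_neg_smul_cross {R : Type*} [CommRing R] (c : R) (v w : Fin 3 → R) :
    c • v ⨯₃ w = ((-c) • w) ⨯₃ v := by
  rw [← cross_anticomm, map_smul, LinearMap.smul_apply, neg_smul, smul_neg]

/-- The dipolar torque equation `J' = γ J × B` is solved by the Larmor rotation:
if `h` solves `h' = L(−γB) ∘ h` with `h(t₁) = id`, where `L(ω) v = ω ×₃ v`,
then `J(t) = h(t) (J(t₁))` for all `t`. -/
theorem larmor_rotation (γ t₁ : ℝ) (B : ℝ → (Fin 3 → ℝ)) (hB : Continuous B)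
    (J : ℝ → (Fin 3 → ℝ)) (hJ : Differentiable ℝ J)
    (hJ' : ∀ t, deriv J t = γ • crossProduct (J t) (B t))
    (h : ℝ → ((Fin 3 → ℝ) →L[ℝ] (Fin 3 → ℝ)))
    (hh : Differentiable ℝ h)
    (hh₁ : h t₁ = ContinuousLinearMap.id ℝ (Fin 3 → ℝ))
    (hh' : ∀ t, deriv h t
      = (LinearMap.toContinuousLinearMap (crossProduct ((-γ) • B t))).comp (h t)) :
    ∀ t, J t = h t (J t₁) := by
  have hJω (t : ℝ) : HasDerivAt J (((-γ) • B t) ⨯₃ J t) t :=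
    smul_cross_eq_neg_smul_cross γ (J t) (B t) ▸ hJ' t ▸ (hJ t).hasDerivAt
  exact larmor_rotation_general (fun _ ↦ dotProductCLM_self_eq_zero.1)
    (fun t ↦ dotProductCLM_cross_add_cross ((-γ) • B t)) hJω
    (fun t ↦ hh' t ▸ (hh t).hasDerivAt) hh₁
end

section
/- Let n ≥ 1, t₁ ∈ ℝ, L₀ ∈ Matrix (Fin n) (Fin n) ℝ. Let h : ℝ → Matrix (Fin n) (Fin n) ℝ be differentiable with h(t) invertible for all t and h(t₁) = 1, and let J : ℝ → Matrix (Fin n) (Fin n) ℝ be differentiable with J(t₁) = L₀. Then the following are equivalent: (i) J(t) = h(t) * L₀ * h(t)⁻¹ for all t; (ii) J'(t) = [h'(t) * h(t)⁻¹, J(t)] for all t. -/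
open Matrix

attribute [local instance] Matrix.linftyOpNormedAddCommGroup Matrix.linftyOpNormedRing
  Matrix.linftyOpNormedAlgebra

/-!
In the frame moving with `h`, the curve `J` becomes `h⁻¹ J h`, whose derivative is
`h⁻¹ (J' - [h' h⁻¹, J]) h`. So `J' = [h' h⁻¹, J]` says exactly that `h⁻¹ J h` is constant, and the
initial condition identifies the constant as `L₀`.
-/

section NontriviallyNormedField

variable {𝕜 A : Type*} [NontriviallyNormedField 𝕜] [NormedRing A] [HasSummableGeomSeries A]
  [NormedAlgebra 𝕜 A] {h : 𝕜 → Aˣ} {h' : A} {t : 𝕜}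

theorem hasDerivAt_units_inv (hh : HasDerivAt (fun s => (h s : A)) h' t) :
    HasDerivAt (fun s => (↑(h s)⁻¹ : A)) (-(↑(h t)⁻¹ * h' * ↑(h t)⁻¹)) t := by
  simpa [Function.comp_def] using (hasFDerivAt_ringInverse (𝕜 := 𝕜) (h t)).comp_hasDerivAt t hh

theorem hasDerivAt_units_conj {X : 𝕜 → A} {X' : A}
    (hh : HasDerivAt (fun s => (h s : A)) h' t) (hX : HasDerivAt X X' t) :
    HasDerivAt (fun s => h s * X s * ↑(h s)⁻¹)
      (h t * X' * ↑(h t)⁻¹ + ⁅h' * ↑(h t)⁻¹, h t * X t * ↑(h t)⁻¹⁆) t := by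
  refine ((hh.mul hX).mul (hasDerivAt_units_inv hh)).congr_deriv ?_
  simp only [Pi.mul_apply, Ring.lie_def, mul_assoc, add_mul, mul_neg, Units.inv_mul_cancel_left]
  abel

theorem hasDerivAt_lie_iff_hasDerivAt_conj_zero {J : 𝕜 → A}
    (hh : HasDerivAt (fun s => (h s : A)) h' t) :
    HasDerivAt J ⁅h' * ↑(h t)⁻¹, J t⁆ t ↔
      HasDerivAt (fun s => ↑(h s)⁻¹ * J s * h s) 0 t := by
  constructor
  · intro hJ
    have hconj := hasDerivAt_units_conj (h := fun s => (h s)⁻¹) (hasDerivAt_units_inv hh) hJ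
    simp only [inv_inv] at hconj
    refine hconj.congr_deriv ?_
    simp only [Ring.lie_def, mul_assoc, mul_sub, sub_mul, neg_mul, mul_neg, Units.inv_mul,
      mul_one, Units.mul_inv_cancel_left]
    abel
  · intro hX
    simpa [mul_assoc] using hasDerivAt_units_conj hh hX

theorem hasDerivAt_iff_deriv_eq {E : Type*} [NormedAddCommGroup E] [NormedSpace 𝕜 E] {f : 𝕜 → E}
    {f' : E} {t : 𝕜} (hf : DifferentiableAt 𝕜 f t) : HasDerivAt f f' t ↔ deriv f t = f' :=
  ⟨HasDerivAt.deriv, fun hf' => hf' ▸ hf.hasDerivAt⟩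

end NontriviallyNormedField

theorem forall_hasDerivAt_zero_iff {𝕜 E : Type*} [RCLike 𝕜] [NormedAddCommGroup E]
    [NormedSpace 𝕜 E] {f : 𝕜 → E} (t₁ : 𝕜) :
    (∀ t, HasDerivAt f 0 t) ↔ ∀ t, f t = f t₁ := by
  constructor
  · intro hf t
    exact is_const_of_deriv_eq_zero (fun s => (hf s).differentiableAt) (fun s => (hf s).deriv) t t₁
  · intro hf t
    exact (hasDerivAt_const t (f t₁)).congr_of_eventuallyEq (.of_forall hf)

theorem eq_units_conj_iff {M : Type*} [Monoid M] {u : Mˣ} {x y : M} :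
    x = u * y * ↑u⁻¹ ↔ ↑u⁻¹ * x * u = y := by
  rw [Units.eq_mul_inv_iff_mul_eq, mul_assoc, Units.inv_mul_eq_iff_eq_mul]

theorem dipolar_constraint_iff_torque_general {𝕜 A : Type*} [RCLike 𝕜] [NormedRing A]
    [HasSummableGeomSeries A] [NormedAlgebra 𝕜 A] (t₁ : 𝕜) (L₀ : A) (h : 𝕜 → Aˣ) (J : 𝕜 → A)
    {h' : 𝕜 → A} (hh : ∀ t, HasDerivAt (fun s => (h s : A)) (h' t) t)
    (hJ₁ : J t₁ = h t₁ * L₀ * ↑(h t₁)⁻¹) :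
    (∀ t, J t = h t * L₀ * ↑(h t)⁻¹) ↔ ∀ t, HasDerivAt J ⁅h' t * ↑(h t)⁻¹, J t⁆ t := by
  simp only [hasDerivAt_lie_iff_hasDerivAt_conj_zero (hh _), forall_hasDerivAt_zero_iff t₁,
    eq_units_conj_iff, eq_units_conj_iff.mp hJ₁]

/-- The affine dipolar-magnetic-torque constraint `J(t) = h(t) L₀ h(t)⁻¹` (with
`h(t₁) = 1`, `J(t₁) = L₀`) is equivalent to the non-conservation-of-momentum equation
`J' = [h' h⁻¹, J]`. -/
theorem dipolar_constraint_iff_torque {n : ℕ} (hn : 1 ≤ n) (t₁ : ℝ)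
    (L₀ : Matrix (Fin n) (Fin n) ℝ)
    (h J : ℝ → Matrix (Fin n) (Fin n) ℝ)
    (hh : Differentiable ℝ h) (hinv : ∀ t, IsUnit (h t)) (hh₁ : h t₁ = 1)
    (hJ : Differentiable ℝ J) (hJ₁ : J t₁ = L₀) :
    (∀ t, J t = h t * L₀ * (h t)⁻¹) ↔
      (∀ t, deriv J t = (deriv h t * (h t)⁻¹) * J t - J t * (deriv h t * (h t)⁻¹)) := by
  lift h to ℝ → (Matrix (Fin n) (Fin n) ℝ)ˣ using hinv
  simpa only [coe_units_inv, Ring.lie_def, hasDerivAt_iff_deriv_eq (hJ _)] using!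
    dipolar_constraint_iff_torque_general t₁ L₀ h J (fun t => (hh t).hasDerivAt) (by simp_all)
end

section
/- Let n ≥ 1. Let P : Matrix (Fin n) (Fin n) ℝ →ₗ[ℝ] Matrix (Fin n) (Fin n) ℝ be a linear projector (P ∘ P = P). Let g, h : ℝ → Matrix (Fin n) (Fin n) ℝ be differentiable with g(t) and h(t) invertible for all t, suppose h'(t) = P(g'(t) * g(t)⁻¹) * h(t) for all t (the dynamic-phase equation), and suppose the equivariance property P(h(t)⁻¹ * X * h(t)) = h(t)⁻¹ * P(X) * h(t) holds for all t and all matrices X. Then the curve g_G(t) := h(t)⁻¹ * g(t) is differentiable and horizontal: P(g_G'(t) * g_G(t)⁻¹) = 0 for all t; in particular g(t) = h(t) * g_G(t) factorizes g into a dynamic phase h and a geometric (horizontal) phase g_G. -/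
open Matrix

attribute [local instance] Matrix.linftyOpNormedAddCommGroup Matrix.linftyOpNormedRing
  Matrix.linftyOpNormedAlgebra

/-!
Write `ω g = g' g⁻¹`. The Leibniz rule gives `ω (h⁻¹ g) = h⁻¹ (ω g - ω h) h`, and the
dynamic-phase equation says `ω h = P (ω g)`. By equivariance, `P` maps `ω (h⁻¹ g)` to
`h⁻¹ P (ω g - P (ω g)) h`, which vanishes because `P` is idempotent.
-/

section RightLogDeriv

open scoped Ring

variable {𝕜 A : Type*} [NontriviallyNormedField 𝕜] [NormedRing A] [NormedAlgebra 𝕜 A]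
  {g h : 𝕜 → A} {t : 𝕜}

/-- The right logarithmic derivative `g' g⁻¹` of a curve in a normed algebra: the velocity
of `g` translated back to the identity on the right. The inverse is `Ring.inverse`, so the
value is `0` wherever `g` is not a unit or not differentiable. -/
noncomputable def rightLogDeriv (g : 𝕜 → A) (t : 𝕜) : A :=
  deriv g t * (g t)⁻¹ʳ

theorem rightLogDeriv_eq_of_deriv_eq_mul {X : A} (hgu : IsUnit (g t))
    (hX : deriv g t = X * g t) : rightLogDeriv g t = X := by
  rw [rightLogDeriv, hX, Ring.mul_inverse_cancel_right _ _ hgu]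

theorem rightLogDeriv_mul (hg : DifferentiableAt 𝕜 g t) (hh : DifferentiableAt 𝕜 h t)
    (hgu : IsUnit (g t)) (hhu : IsUnit (h t)) :
    rightLogDeriv (fun s => g s * h s) t =
      rightLogDeriv g t + g t * rightLogDeriv h t * (g t)⁻¹ʳ := by
  refine rightLogDeriv_eq_of_deriv_eq_mul (g := fun s => g s * h s) (hgu.mul hhu) ?_
  calc
    deriv (fun s => g s * h s) t = deriv g t * h t + g t * deriv h t := deriv_fun_mul hg hh
    _ = (rightLogDeriv g t + g t * rightLogDeriv h t * (g t)⁻¹ʳ) * (g t * h t) := by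
      simp only [rightLogDeriv, add_mul, mul_assoc, Ring.inverse_mul_cancel_left _ _ hgu,
        Ring.inverse_mul_cancel _ hhu, mul_one]

variable [HasSummableGeomSeries A]

theorem deriv_ringInverse_comp (hg : DifferentiableAt 𝕜 g t) (hgu : IsUnit (g t)) :
    deriv (fun s => (g s)⁻¹ʳ) t = -((g t)⁻¹ʳ * deriv g t * (g t)⁻¹ʳ) := by
  obtain ⟨u, hu⟩ := hgu
  have hinv : HasFDerivAt Ring.inverse
      (-ContinuousLinearMap.mulLeftRight 𝕜 A ↑u⁻¹ ↑u⁻¹) (g t) :=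
    hu ▸ hasFDerivAt_ringInverse u
  simpa only [Function.comp_def, _root_.neg_apply, ContinuousLinearMap.mulLeftRight_apply,
    ← hu, Ring.inverse_unit] using (hinv.comp_hasDerivAt t hg.hasDerivAt).deriv

theorem rightLogDeriv_ringInverse (hg : DifferentiableAt 𝕜 g t) (hgu : IsUnit (g t)) :
    rightLogDeriv (fun s => (g s)⁻¹ʳ) t = -((g t)⁻¹ʳ * rightLogDeriv g t * g t) := by
  refine rightLogDeriv_eq_of_deriv_eq_mul (g := fun s => (g s)⁻¹ʳ) hgu.ringInverse ?_
  rw [deriv_ringInverse_comp hg hgu, rightLogDeriv, neg_mul,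
    Ring.mul_inverse_cancel_right _ _ hgu, mul_assoc]

theorem rightLogDeriv_ringInverse_mul (hg : DifferentiableAt 𝕜 g t)
    (hh : DifferentiableAt 𝕜 h t) (hgu : IsUnit (g t)) (hhu : IsUnit (h t)) :
    rightLogDeriv (fun s => (h s)⁻¹ʳ * g s) t =
      (h t)⁻¹ʳ * (rightLogDeriv g t - rightLogDeriv h t) * h t := by
  rw [rightLogDeriv_mul (hh.inverse hhu) hg hhu.ringInverse hgu,
    rightLogDeriv_ringInverse hh hhu, Ring.inverse_inverse hhu]
  noncomm_ring

theorem phase_factorization_general (P : A →+ A) (hP : ∀ X, P (P X) = P X)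
    (hg : DifferentiableAt 𝕜 g t) (hh : DifferentiableAt 𝕜 h t)
    (hgu : IsUnit (g t)) (hhu : IsUnit (h t))
    (hdyn : deriv h t = P (rightLogDeriv g t) * h t)
    (hequiv : ∀ X, P ((h t)⁻¹ʳ * X * h t) = (h t)⁻¹ʳ * P X * h t) :
    DifferentiableAt 𝕜 (fun s => (h s)⁻¹ʳ * g s) t ∧
      P (rightLogDeriv (fun s => (h s)⁻¹ʳ * g s) t) = 0 := by
  refine ⟨(hh.inverse hhu).mul hg, ?_⟩
  have hω : rightLogDeriv h t = P (rightLogDeriv g t) :=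
    rightLogDeriv_eq_of_deriv_eq_mul hhu hdyn
  rw [rightLogDeriv_ringInverse_mul hg hh hgu hhu, hω, hequiv, map_sub, hP, sub_self,
    mul_zero, zero_mul]

end RightLogDeriv

/-- Dynamic/geometric phase factorization: if the dynamic phase `h` solves
`h' = P(g' g⁻¹) h` for a projector `P` commuting with conjugation by `h`, then
`g_G := h⁻¹ g` is differentiable and horizontal (`P(g_G' g_G⁻¹) = 0`), so that
`g = h · g_G` factorizes `g` into a dynamic and a geometric phase. -/
theorem phase_factorization {n : ℕ} (hn : 1 ≤ n)
    (P : Matrix (Fin n) (Fin n) ℝ →ₗ[ℝ] Matrix (Fin n) (Fin n) ℝ)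
    (hP : P ∘ₗ P = P)
    (g h : ℝ → Matrix (Fin n) (Fin n) ℝ)
    (hg : Differentiable ℝ g) (hh : Differentiable ℝ h)
    (hginv : ∀ t, IsUnit (g t)) (hhinv : ∀ t, IsUnit (h t))
    (hdyn : ∀ t, deriv h t = P (deriv g t * (g t)⁻¹) * h t)
    (hequiv : ∀ t (X : Matrix (Fin n) (Fin n) ℝ),
      P ((h t)⁻¹ * X * h t) = (h t)⁻¹ * P X * h t) :
    Differentiable ℝ (fun t => (h t)⁻¹ * g t) ∧
    (∀ t, P (deriv (fun s => (h s)⁻¹ * g s) t * ((h t)⁻¹ * g t)⁻¹) = 0) := by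
  simp only [nonsing_inv_eq_ringInverse] at hdyn hequiv ⊢
  exact forall_and.mp fun t => phase_factorization_general P.toAddMonoidHom
    (LinearMap.congr_fun hP) (hg t) (hh t) (hginv t) (hhinv t) (hdyn t) (hequiv t)
end

section
/- Let n ≥ 1 and write ⟨X, Y⟩ := trace(X * Y) for X, Y ∈ Matrix (Fin n) (Fin n) ℝ. Let I₀ : ℝ → (Matrix (Fin n) (Fin n) ℝ ≃ₗ[ℝ] Matrix (Fin n) (Fin n) ℝ) be differentiable with each I₀(t) symmetric for the trace pairing (⟨I₀(t) X, Y⟩ = ⟨I₀(t) Y, X⟩ for all X, Y), let J₀ : ℝ → Matrix (Fin n) (Fin n) ℝ and K_int : ℝ → ℝ be differentiable, let Π : ℝ → Matrix (Fin n) (Fin n) ℝ be differentiable with Π'(t) = [Π(t), I₀(t)⁻¹(Π(t) − J₀(t))] for all t, and let E : ℝ → ℝ be differentiable with −E'(t) = (1/2)·⟨((d/dt)(I₀⁻¹))(Π(t)), Π(t)⟩ − ⟨Π(t), (d/dt)(I₀⁻¹(J₀))(t)⟩ + T₀'(t) for all t, where T₀(t) := K_int(t) − (1/2)·⟨I₀(t)⁻¹(J₀(t)),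 J₀(t)⟩. Then the function t ↦ E(t) + K(t) − ⟨Π(t), I₀(t)⁻¹(J₀(t))⟩ is constant, where K(t) := K_int(t) + (1/2)·⟨I₀(t)⁻¹(Π(t)), Π(t)⟩ − (1/2)·⟨I₀(t)⁻¹(J₀(t)), J₀(t)⟩. -/
/-!
The conserved quantity is the Hamiltonian `E + h + T₀` itself, where
`h = ½⟨I₀⁻¹ Π, Π⟩ − ⟨I₀⁻¹ J₀, Π⟩`. Since `I₀⁻¹` is symmetric, the gradient of `h` in `Π` is the body
velocity `ξ = I₀⁻¹(Π − J₀)`, so along a solution its derivative is the explicit time derivative of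
`h + T₀`, which `E'` cancels, plus the power `⟨ξ, Π'⟩`. The power vanishes because
`⟨ξ, [Π, ξ]⟩ = 0` by invariance of the trace.
-/

open Matrix

attribute [local instance] Matrix.linftyOpNormedAddCommGroup Matrix.linftyOpNormedRing
  Matrix.linftyOpNormedAlgebra

section Pairing

variable {𝕜 V W : Type*} [NontriviallyNormedField 𝕜]
  [NormedAddCommGroup V] [NormedSpace 𝕜 V] [NormedAddCommGroup W] [NormedSpace 𝕜 W]
  (P : V →L[𝕜] W →L[𝕜] 𝕜)

theorem hasDerivAt_pairing_apply_self {A : 𝕜 → W →L[𝕜] V} {A' : W →L[𝕜] V}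
    {w : 𝕜 → W} {w' : W} {t : 𝕜} (hA : HasDerivAt A A' t) (hw : HasDerivAt w w' t)
    (hsym : ∀ x y, P (A t x) y = P (A t y) x) :
    HasDerivAt (fun s => P (A s (w s)) (w s)) (P (A' (w t)) (w t) + 2 * P (A t (w t)) w') t := by
  refine (P.hasDerivAt_of_bilinear (fun _ => hA.clm_apply hw) fun _ => hw).congr_deriv ?_
  rw [map_add, _root_.add_apply, hsym w' (w t)]
  ring

theorem hasDerivAt_half_pairing_apply_self_sub [NeZero (2 : 𝕜)]
    {A : 𝕜 → W →L[𝕜] V} {A' : W →L[𝕜] V} {v : 𝕜 → V} {v' : V} {w : 𝕜 → W} {w' : W} {t : 𝕜}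
    (hA : HasDerivAt A A' t) (hv : HasDerivAt v v' t) (hw : HasDerivAt w w' t)
    (hsym : ∀ x y, P (A t x) y = P (A t y) x) :
    HasDerivAt (fun s => (1 / 2) * P (A s (w s)) (w s) - P (v s) (w s))
      ((1 / 2) * P (A' (w t)) (w t) - P v' (w t) + P (A t (w t) - v t) w') t := by
  refine (((hasDerivAt_pairing_apply_self P hA hw hsym).const_mul (1 / 2)).sub
    (P.hasDerivAt_of_bilinear (fun _ => hv) fun _ => hw)).congr_deriv ?_
  rw [map_sub, _root_.sub_apply]
  field_simp
  ring

end Pairing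

/-- `P` pairs the Lie algebra with its dual and `A` is the inverse of the locked inertia tensor. For
`hpower`, the coadjoint equation `⟨η, Π'⟩ = ⟨[ξ, η], Π⟩` with `ξ = A (Π − J₀)` is tested on `η = ξ`. -/
theorem energy_momentum_conjugate_to_time_general {V W : Type*}
    [NormedAddCommGroup V] [NormedSpace ℝ V] [NormedAddCommGroup W] [NormedSpace ℝ W]
    (P : V →L[ℝ] W →L[ℝ] ℝ) {A : ℝ → W →L[ℝ] V} (hA : Differentiable ℝ A)
    (hsym : ∀ t x y, P (A t x) y = P (A t y) x)
    {J₀ : ℝ → W} (hJ₀ : Differentiable ℝ J₀) {Kint : ℝ → ℝ} (hKint : Differentiable ℝ Kint)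
    {Mom : ℝ → W} (hMom : Differentiable ℝ Mom)
    (hpower : ∀ t, P (A t (Mom t - J₀ t)) (deriv Mom t) = 0)
    {T₀ : ℝ → ℝ} (hT₀ : ∀ t, T₀ t = Kint t - (1 / 2) * P (A t (J₀ t)) (J₀ t))
    {E : ℝ → ℝ} (hE : Differentiable ℝ E)
    (hE' : ∀ t, -deriv E t = (1 / 2) * P (deriv A t (Mom t)) (Mom t)
      - P (deriv (fun s => A s (J₀ s)) t) (Mom t) + deriv T₀ t)
    {K : ℝ → ℝ} (hK : ∀ t, K t = Kint t + (1 / 2) * P (A t (Mom t)) (Mom t)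
      - (1 / 2) * P (A t (J₀ t)) (J₀ t)) (s t : ℝ) :
    E s + K s - P (A s (J₀ s)) (Mom s) = E t + K t - P (A t (J₀ t)) (Mom t) := by
  have hAJ : Differentiable ℝ fun r => A r (J₀ r) := hA.clm_apply hJ₀
  have hT₀_diff : Differentiable ℝ T₀ := by
    rw [funext hT₀]
    exact hKint.sub (((P.differentiable.comp hAJ).clm_apply hJ₀).const_mul _)
  have hamiltonian_eq : ∀ r, E r + K r - P (A r (J₀ r)) (Mom r)
      = E r + ((1 / 2) * P (A r (Mom r)) (Mom r) - P (A r (J₀ r)) (Mom r)) + T₀ r := fun r => by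
    rw [hK, hT₀]
    ring
  have hamiltonian_deriv : ∀ r, HasDerivAt (fun r =>
      E r + ((1 / 2) * P (A r (Mom r)) (Mom r) - P (A r (J₀ r)) (Mom r)) + T₀ r) 0 r := fun r => by
    refine (((hE r).hasDerivAt.add (hasDerivAt_half_pairing_apply_self_sub P (hA r).hasDerivAt
      (hAJ r).hasDerivAt (hMom r).hasDerivAt (hsym r))).add (hT₀_diff r).hasDerivAt).congr_deriv ?_
    rw [← map_sub, hpower]
    linarith [hE' r]
  rw [hamiltonian_eq, hamiltonian_eq]
  exact is_const_of_deriv_eq_zero (fun r => (hamiltonian_deriv r).differentiableAt)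
    (fun r => (hamiltonian_deriv r).deriv) s t

section Trace

variable {m R : Type*} [Fintype m]

/-- The trace pairing `⟨X, Y⟩ = trace (X * Y)` as a continuous bilinear form, for the entrywise
topology on matrices, which every matrix norm induces. -/
noncomputable def tracePairing (m 𝕜 : Type*) [Fintype m] [NontriviallyNormedField 𝕜]
    [CompleteSpace 𝕜] : Matrix m m 𝕜 →L[𝕜] Matrix m m 𝕜 →L[𝕜] 𝕜 :=
  ((LinearMap.mul 𝕜 (Matrix m m 𝕜)).compr₂ (traceLinearMap m 𝕜 𝕜)).toContinuousBilinearMap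

theorem trace_symm_mul_comm [NonUnitalNonAssocCommSemiring R] (e : Matrix m m R ≃ Matrix m m R)
    (he : ∀ X Y, trace (e X * Y) = trace (e Y * X)) (X Y : Matrix m m R) :
    trace (e.symm X * Y) = trace (e.symm Y * X) := by
  simpa [trace_mul_comm (e.symm _)] using he (e.symm Y) (e.symm X)

theorem trace_mul_commutator_self [NonUnitalCommRing R] (X Y : Matrix m m R) :
    trace (Y * (X * Y - Y * X)) = 0 := by
  rw [mul_sub, trace_sub, trace_mul_comm Y (Y * X), Matrix.mul_assoc, sub_self]

end Trace

/-- The momentum `E` conjugate to time: along solutions of the body momentum equation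
`Π' = [Π, I₀⁻¹(Π − J₀)]`, with `E` solving the Hamiltonian equation
`−E' = ½⟨(d/dt I₀⁻¹)(Π), Π⟩ − ⟨Π, d/dt(I₀⁻¹ J₀)⟩ + T₀'` where
`T₀ = K_int − ½⟨I₀⁻¹ J₀, J₀⟩`, the quantity `E + K − ⟨Π, I₀⁻¹ J₀⟩` is constant, where
`K = K_int + ½⟨I₀⁻¹ Π, Π⟩ − ½⟨I₀⁻¹ J₀, J₀⟩` is the kinetic energy and
`⟨X, Y⟩ = trace (X * Y)` is the trace pairing. -/
theorem energy_momentum_conjugate_to_time {n : ℕ} (hn : 1 ≤ n)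
    (I₀ : ℝ → (Matrix (Fin n) (Fin n) ℝ ≃L[ℝ] Matrix (Fin n) (Fin n) ℝ))
    (hI : Differentiable ℝ
      (fun t => (I₀ t : Matrix (Fin n) (Fin n) ℝ →L[ℝ] Matrix (Fin n) (Fin n) ℝ)))
    (hIinv : Differentiable ℝ
      (fun t => ((I₀ t).symm : Matrix (Fin n) (Fin n) ℝ →L[ℝ] Matrix (Fin n) (Fin n) ℝ)))
    (hsym : ∀ t (X Y : Matrix (Fin n) (Fin n) ℝ),
      Matrix.trace (I₀ t X * Y) = Matrix.trace (I₀ t Y * X))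
    (J₀ : ℝ → Matrix (Fin n) (Fin n) ℝ) (hJ₀ : Differentiable ℝ J₀)
    (Kint : ℝ → ℝ) (hKint : Differentiable ℝ Kint)
    (Mom : ℝ → Matrix (Fin n) (Fin n) ℝ) (hMom : Differentiable ℝ Mom)
    (hMom' : ∀ t, deriv Mom t
      = Mom t * (I₀ t).symm (Mom t - J₀ t) - (I₀ t).symm (Mom t - J₀ t) * Mom t)
    (T₀ : ℝ → ℝ)
    (hT₀ : ∀ t, T₀ t = Kint t - (1 / 2) * Matrix.trace ((I₀ t).symm (J₀ t) * J₀ t))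
    (E : ℝ → ℝ) (hE : Differentiable ℝ E)
    (hE' : ∀ t, -deriv E t
      = (1 / 2) * Matrix.trace
          ((deriv (fun s => ((I₀ s).symm :
              Matrix (Fin n) (Fin n) ℝ →L[ℝ] Matrix (Fin n) (Fin n) ℝ)) t) (Mom t) * Mom t)
        - Matrix.trace (Mom t * deriv (fun s => (I₀ s).symm (J₀ s)) t)
        + deriv T₀ t)
    (K : ℝ → ℝ)
    (hK : ∀ t, K t = Kint t + (1 / 2) * Matrix.trace ((I₀ t).symm (Mom t) * Mom t)
        - (1 / 2) * Matrix.trace ((I₀ t).symm (J₀ t) * J₀ t)) :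
    ∀ s t, E s + K s - Matrix.trace (Mom s * (I₀ s).symm (J₀ s))
      = E t + K t - Matrix.trace (Mom t * (I₀ t).symm (J₀ t)) := by
  have hpower (t : ℝ) : trace ((I₀ t).symm (Mom t - J₀ t) * deriv Mom t) = 0 := by
    rw [hMom', trace_mul_commutator_self]
  simp only [trace_mul_comm (Mom _)] at hE' ⊢
  exact energy_momentum_conjugate_to_time_general (V := Matrix (Fin n) (Fin n) ℝ)
    (W := Matrix (Fin n) (Fin n) ℝ) (tracePairing (Fin n) ℝ) hIinv
    (fun t => trace_symm_mul_comm (I₀ t).toEquiv (hsym t)) hJ₀ hKint hMom hpower hT₀ hE hE' hK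
end
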